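/- Let n, k be positive integers with k ≤ n and let A ∈ ℝ^{2n×2k} be orthogonal and symplectic, i.e., AᵀA = I_{2k} and Aᵀ J_{2n} A = J_{2k}. Then Aᵀ J_{2n} = J_{2k} Aᵀ (equivalently, J_{2n} A = A J_{2k}). -/

import Mathlib

open Matrix
open scoped RealInnerProductSpace

/-- The Euclidean (2-) norm of a real vector. -/
noncomputable def enorm {ι : Type*} [Fintype ι] (v : ι → ℝ) : ℝ :=
  Real.sqrt (∑ i, (v i) ^ 2)

/-- The squared Frobenius norm of a real matrix. -/
noncomputable def frobSq {ι κ : Type*} [Fintype ι] [Fintype κ] (M : Matrix ι κ ℝ) : ℝ :=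
  ∑ i, ∑ j, (M i j) ^ 2

/-- The Frobenius norm of a real matrix. -/
noncomputable def frobNorm {ι κ : Type*} [Fintype ι] [Fintype κ] (M : Matrix ι κ ℝ) : ℝ :=
  Real.sqrt (frobSq M)

/-- The spectral (operator 2-) norm of a real matrix. -/
noncomputable def specNorm {ι κ : Type*} [Fintype ι] [Fintype κ] [DecidableEq κ]
    (M : Matrix ι κ ℝ) : ℝ :=
  ‖LinearMap.toContinuousLinearMap (Matrix.toEuclideanLin M)‖

/-- Matrix-vector multiplication as a map between Euclidean spaces. -/
noncomputable def mulVecE {ι κ : Type*} [Fintype ι] [Fintype κ] [DecidableEq κ]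
    (M : Matrix ι κ ℝ) (v : EuclideanSpace ℝ κ) : EuclideanSpace ℝ ι :=
  Matrix.toEuclideanLin M v

/-- A matrix as a continuous linear map between Euclidean spaces. -/
noncomputable def toCLM {ι κ : Type*} [Fintype ι] [Fintype κ] [DecidableEq κ]
    (M : Matrix ι κ ℝ) : EuclideanSpace ℝ κ →L[ℝ] EuclideanSpace ℝ ι :=
  LinearMap.toContinuousLinearMap (Matrix.toEuclideanLin M)

/-- The canonical Poisson (symplectic) matrix `J = [[0, I], [-I, 0]]` of size `2n × 2n`. -/
noncomputable def Jmat (n : ℕ) : Matrix (Fin n ⊕ Fin n) (Fin n ⊕ Fin n) ℝ :=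
  Matrix.fromBlocks 0 1 (-1) 0

/-- A column selection matrix: its columns are distinct standard basis vectors. -/
def IsSelection {a b : ℕ} (P : Matrix (Fin a) (Fin b) ℝ) : Prop :=
  ∃ β : Fin b → Fin a, Function.Injective β ∧ ∀ i j, P i j = if i = β j then 1 else 0

theorem Jmat_mul_transpose_self (n : ℕ) : Jmat n * (Jmat n)ᵀ = 1 := by
  simp [Jmat, Matrix.fromBlocks_transpose, Matrix.fromBlocks_multiply]

/-- an orthogonal symplectic matrix `A` satisfies `Aᵀ J_{2n} = J_{2k} Aᵀ`. -/
theorem stmt_0 (n k : ℕ) (hn : 0 < n) (hk : 0 < k) (hkn : k ≤ n)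
    (A : Matrix (Fin n ⊕ Fin n) (Fin k ⊕ Fin k) ℝ)
    (horth : Aᵀ * A = 1) (hsymp : Aᵀ * Jmat n * A = Jmat k) :
    Aᵀ * Jmat n = Jmat k * Aᵀ := by
  have hT : Aᵀ * ((Jmat n)ᵀ * A) = (Jmat k)ᵀ := by
    rw [← hsymp]
    simp [Matrix.transpose_mul]
  have hM : (Aᵀ * Jmat n - Jmat k * Aᵀ) * (Aᵀ * Jmat n - Jmat k * Aᵀ)ᵀ = 0 := by
    have h1 : Aᵀ * Jmat n * ((Jmat n)ᵀ * A) = 1 := by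
      rw [Matrix.mul_assoc, ← Matrix.mul_assoc (Jmat n), Jmat_mul_transpose_self,
        Matrix.one_mul, horth]
    have h2 : Aᵀ * Jmat n * (A * (Jmat k)ᵀ) = 1 := by
      rw [← Matrix.mul_assoc, hsymp, Jmat_mul_transpose_self]
    have h3 : Jmat k * Aᵀ * ((Jmat n)ᵀ * A) = 1 := by
      rw [Matrix.mul_assoc, hT, Jmat_mul_transpose_self]
    have h4 : Jmat k * Aᵀ * (A * (Jmat k)ᵀ) = 1 := by
      rw [Matrix.mul_assoc, ← Matrix.mul_assoc Aᵀ, horth, Matrix.one_mul,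
        Jmat_mul_transpose_self]
    rw [Matrix.transpose_sub, Matrix.transpose_mul, Matrix.transpose_mul,
      Matrix.transpose_transpose, Matrix.sub_mul, Matrix.mul_sub, Matrix.mul_sub, h1, h2, h3, h4]
    simp
  rw [← Matrix.conjTranspose_eq_transpose_of_trivial (Aᵀ * Jmat n - Jmat k * Aᵀ)] at hM
  exact sub_eq_zero.mp (Matrix.self_mul_conjTranspose_eq_zero.mp hM)
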